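/- Let X be a partial EFX allocation in a non-degenerate instance and g an unallocated good. Suppose agents 1 and 2 champion each other (1 is a most envious agent for X_2 ∪ {g} and 2 is a most envious agent for X_1 ∪ {g}), neither agent 1 nor agent 2 is a most envious agent for his own bundle plus g, agent 1 does not envy agent 2, agent 2 does not envy agent 1, and agent 3 envies neither agent 1 nor agent 2. Then there exists a partial EFX allocation Y with Y_1 ∪ Y_2 ∪ Y_3 ⊆ X_1 ∪ X_2 ∪ X_3 ∪ {g} that Pareto dominates X. -/

import Mathlib

open Finset

/-- Additive value of a bundle `S` under per-good valuation `v`. -/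
noncomputable def val {G : Type*} (v : G → ℝ) (S : Finset G) : ℝ := ∑ g ∈ S, v g

/-- `X` is EFX: no agent `i` strongly envies agent `j`, i.e. for every good `g`
in `X j`, `v_i(X_i) ≥ v_i(X_j \ {g})`. -/
def EFX {G : Type*} [DecidableEq G] (v : Fin 3 → G → ℝ) (X : Fin 3 → Finset G) : Prop :=
  ∀ i j : Fin 3, ∀ g ∈ X j, val (v i) (X j \ {g}) ≤ val (v i) (X i)

/-- `κ_X(i,S)`: the minimum cardinality of a subset `S' ⊆ S` with `v_i(S') > v_i(X_i)`. -/
noncomputable def kappa {G : Type*} (v : G → ℝ) (Xi S : Finset G) : ℕ :=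
  sInf {n : ℕ | ∃ S' ⊆ S, S'.card = n ∧ val v Xi < val v S'}

/-- Agent `i` is a most envious agent for the bundle `S` under allocation `X`. -/
def MostEnvious {G : Type*} (v : Fin 3 → G → ℝ) (X : Fin 3 → Finset G)
    (i : Fin 3) (S : Finset G) : Prop :=
  val (v i) (X i) < val (v i) S ∧
    ∀ k : Fin 3, val (v k) (X k) < val (v k) S →
      kappa (v i) (X i) S ≤ kappa (v k) (X k) S

/-- A bundle no proper part of which is worth more to any agent than that agent's own bundle. -/
def UnenviedParts {G : Type*} (v : Fin 3 → G → ℝ) (X : Fin 3 → Finset G) (S : Finset G) : Prop :=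
  ∀ k : Fin 3, ∀ T ⊂ S, val (v k) T ≤ val (v k) (X k)

theorem val_mono {G : Type*} {v : G → ℝ} {S T : Finset G} (hST : S ⊆ T)
    (hv : ∀ g ∈ T, 0 ≤ v g) : val v S ≤ val v T :=
  Finset.sum_le_sum_of_subset_of_nonneg hST fun g hg _ => hv g hg

theorem val_union_of_disjoint {G : Type*} [DecidableEq G] {v : G → ℝ} {S T : Finset G}
    (h : Disjoint S T) : val v (S ∪ T) = val v S + val v T :=
  Finset.sum_union h

theorem val_insert {G : Type*} [DecidableEq G] {v : G → ℝ} {g : G} {T : Finset G}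
    (h : g ∉ T) : val v (insert g T) = v g + val v T :=
  Finset.sum_insert h

theorem kappa_le_card {G : Type*} {v : G → ℝ} {Xi S T : Finset G} (hT : T ⊆ S)
    (h : val v Xi < val v T) : kappa v Xi S ≤ T.card :=
  Nat.sInf_le ⟨T, hT, rfl, h⟩

/-- A most envious agent for `B` prefers to his own bundle some part `S` of `B` whose proper parts
nobody envies, and which no envious agent who is not most envious for `B` prefers to his own. -/
theorem MostEnvious.exists_subset {G : Type*} {v : Fin 3 → G → ℝ} {X : Fin 3 → Finset G}
    {i : Fin 3} {B : Finset G} (hB : ∀ k, ∀ x ∈ B, 0 ≤ v k x) (h : MostEnvious v X i B) :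
    ∃ S ⊆ B, val (v i) (X i) < val (v i) S ∧ UnenviedParts v X S ∧
      ∀ k, val (v k) (X k) < val (v k) B → ¬ MostEnvious v X k B →
        val (v k) S ≤ val (v k) (X k) := by
  obtain ⟨S, hSB, hcard, hS⟩ :
      kappa (v i) (X i) B ∈ {n | ∃ S' ⊆ B, S'.card = n ∧ val (v i) (X i) < val (v i) S'} :=
    Nat.sInf_mem ⟨B.card, B, Finset.Subset.refl B, rfl, h.1⟩
  refine ⟨S, hSB, hS, fun k T hT => ?_, fun k hk hnot => ?_⟩
  · by_contra! hlt
    have hTB := hT.1.trans hSB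
    have h₁ := h.2 k (hlt.trans_le (val_mono hTB (hB k)))
    have h₂ := kappa_le_card hTB hlt
    have h₃ := Finset.card_lt_card hT
    omega
  · by_contra! hlt
    have h₁ := kappa_le_card hSB hlt
    exact hnot ⟨hk, fun l hl => by
      have h₂ := h.2 l hl
      omega⟩

/-- A bundle inside `B ∪ {g}` that beats a value which `B` does not beat contains `g`. -/
theorem exists_eq_insert_of_val_lt {G : Type*} [DecidableEq G] {v : G → ℝ} {A B S : Finset G}
    {g : G} (hv : ∀ x ∈ B, 0 ≤ v x) (hS : S ⊆ B ∪ {g}) (hAB : val v B ≤ val v A)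
    (h : val v A < val v S) : ∃ T ⊆ B, S = insert g T := by
  have hsub : S.erase g ⊆ B := by
    intro x hx
    have := hS (Finset.mem_of_mem_erase hx)
    have := Finset.ne_of_mem_erase hx
    simp_all
  refine ⟨S.erase g, hsub, (Finset.insert_erase ?_).symm⟩
  by_contra hgS
  rw [Finset.erase_eq_of_notMem hgS] at hsub
  linarith [val_mono hsub hv]

theorem UnenviedParts.val_sdiff_le {G : Type*} [DecidableEq G] {v : Fin 3 → G → ℝ}
    {X : Fin 3 → Finset G} {S : Finset G} (h : UnenviedParts v X S) (k : Fin 3) {x : G}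
    (hx : x ∈ S) : val (v k) (S \ {x}) ≤ val (v k) (X k) :=
  h k _ (Finset.sdiff_ssubset (by simpa using hx) (by simp))

/-- Agent `i` receives `T' ∪ {g}`, agent `j` exchanges the part `T'` of his bundle for the part `T`
of agent `i`'s bundle, and agent `k` keeps his bundle. -/
theorem exists_dominating_efx_of_exchange {G : Type*} [DecidableEq G] {M : Finset G}
    {v : Fin 3 → G → ℝ} (hv : ∀ i : Fin 3, ∀ g ∈ M, 0 ≤ v i g)
    {X : Fin 3 → Finset G} (hXM : ∀ i, X i ⊆ M)
    (hdisj : ∀ i j, i ≠ j → Disjoint (X i) (X j)) (hEFX : EFX v X)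
    {g : G} (hg : g ∈ M) (hun : ∀ i, g ∉ X i)
    {i j k : Fin 3} (hij : i ≠ j) (hik : i ≠ k) (hjk : j ≠ k)
    {T T' : Finset G} (hT : T ⊆ X i) (hT' : T' ⊆ X j)
    (hiT' : val (v i) (X i) < val (v i) (insert g T'))
    (hiT : val (v i) (insert g T) ≤ val (v i) (X i))
    (hjT : val (v j) (X j) < val (v j) (insert g T))
    (hjT' : val (v j) (insert g T') ≤ val (v j) (X j))
    (hparts : UnenviedParts v X (insert g T'))
    (hnij : val (v i) (X j) ≤ val (v i) (X i))
    (hnkj : val (v k) (T ∪ X j \ T') ≤ val (v k) (X k)) :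
    ∃ Y : Fin 3 → Finset G,
      (∀ l, Y l ⊆ M) ∧
      (∀ l m, l ≠ m → Disjoint (Y l) (Y m)) ∧
      (∀ l, Y l ⊆ X 0 ∪ X 1 ∪ X 2 ∪ {g}) ∧
      EFX v Y ∧
      (∀ l, val (v l) (X l) ≤ val (v l) (Y l)) ∧
      (∃ l, val (v l) (X l) < val (v l) (Y l)) := by
  have hcases : ∀ l : Fin 3, l = i ∨ l = j ∨ l = k := by omega
  have hX : ∀ l, X l ⊆ X 0 ∪ X 1 ∪ X 2 ∪ {g} := by
    intro l x hx
    fin_cases l <;> simp_all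
  have hgT : g ∉ T := fun h => hun i (hT h)
  have hgT' : g ∉ T' := fun h => hun j (hT' h)
  have hdT : Disjoint T (X j \ T') :=
    (hdisj i j hij).mono hT Finset.sdiff_subset
  have hsplit : ∀ l, val (v l) (X j) = val (v l) T' + val (v l) (X j \ T') := fun l => by
    rw [← val_union_of_disjoint Finset.disjoint_sdiff, Finset.union_sdiff_of_subset hT']
  rw [val_insert hgT'] at hiT' hjT'
  rw [val_insert hgT] at hiT hjT
  have hiY : val (v i) (T ∪ X j \ T') ≤ val (v i) (X i) := by
    rw [val_union_of_disjoint hdT]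
    linarith [hsplit i]
  have hjY : val (v j) (X j) ≤ val (v j) (T ∪ X j \ T') := by
    rw [val_union_of_disjoint hdT]
    linarith [hsplit j]
  obtain ⟨Y, hYi, hYj, hYk⟩ : ∃ Y : Fin 3 → Finset G,
      Y i = insert g T' ∧ Y j = T ∪ X j \ T' ∧ Y k = X k :=
    ⟨fun l => if l = i then insert g T' else if l = j then T ∪ X j \ T' else X k,
      by simp, by simp [hij.symm], by simp [hik.symm, hjk.symm]⟩
  have hYM : ∀ l, Y l ⊆ M := by
    intro l
    rcases hcases l with rfl | rfl | rfl
    · rw [hYi]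
      exact Finset.insert_subset hg (hT'.trans (hXM j))
    · rw [hYj]
      exact Finset.union_subset (hT.trans (hXM i)) (Finset.sdiff_subset.trans (hXM _))
    · rw [hYk]
      exact hXM _
  have hge : ∀ l, val (v l) (X l) ≤ val (v l) (Y l) := by
    intro l
    rcases hcases l with rfl | rfl | rfl
    · rw [hYi, val_insert hgT']
      exact hiT'.le
    · rwa [hYj]
    · rw [hYk]
  have hdij : Disjoint (Y i) (Y j) := by
    rw [hYi, hYj, Finset.disjoint_insert_left]
    refine ⟨by simp [hgT, hun], Finset.disjoint_union_right.2
      ⟨(hdisj j i hij.symm).mono hT' hT, Finset.disjoint_sdiff⟩⟩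
  have hdik : Disjoint (Y i) (Y k) := by
    rw [hYi, hYk, Finset.disjoint_insert_left]
    exact ⟨hun k, (hdisj j k hjk).mono_left hT'⟩
  have hdjk : Disjoint (Y j) (Y k) := by
    rw [hYj, hYk]
    exact Finset.disjoint_union_left.2
      ⟨(hdisj i k hik).mono_left hT, (hdisj j k hjk).mono_left Finset.sdiff_subset⟩
  refine ⟨Y, hYM, ?_, ?_, ?_, hge, i, ?_⟩
  · intro l m hlm
    rcases hcases l with rfl | rfl | rfl <;> rcases hcases m with rfl | rfl | rfl <;>
      first
        | exact absurd rfl hlm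
        | assumption
        | (apply Disjoint.symm; assumption)
  · intro l
    rcases hcases l with rfl | rfl | rfl
    · rw [hYi]
      exact Finset.insert_subset (by simp) (hT'.trans (hX j))
    · rw [hYj]
      exact Finset.union_subset (hT.trans (hX i)) (Finset.sdiff_subset.trans (hX _))
    · rw [hYk]
      exact hX _
  · intro l m x hx
    have hdel : val (v l) (Y m \ {x}) ≤ val (v l) (Y m) :=
      val_mono Finset.sdiff_subset fun y hy => hv l y (hYM m hy)
    rcases hcases m with rfl | rfl | rfl
    · rw [hYi] at hx ⊢
      exact (hparts.val_sdiff_le l hx).trans (hge l)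
    · rcases hcases l with rfl | rfl | rfl
      · exact hdel.trans ((hYj ▸ hiY).trans (hge _))
      · exact hdel
      · exact hdel.trans ((hYj ▸ hnkj).trans (hge _))
    · rw [hYk] at hx ⊢
      exact (hEFX l _ x hx).trans (hge l)
  · rwa [hYi, val_insert hgT']

/-- Remark 5: if agents 1 and 2 (indices 0 and 1) champion each other, neither
self-champions, they do not envy each other, and agent 3 (index 2) envies neither of them,
then there is a Pareto dominating partial EFX allocation. -/
theorem two_cycle_gives_dominating_efx {G : Type*} [DecidableEq G] (M : Finset G)
    (v : Fin 3 → G → ℝ) (hv : ∀ i : Fin 3, ∀ g ∈ M, 0 ≤ v i g)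
    (hnd : ∀ i : Fin 3, ∀ S ⊆ M, ∀ T ⊆ M, S ≠ T → val (v i) S ≠ val (v i) T)
    (X : Fin 3 → Finset G) (hXM : ∀ i, X i ⊆ M)
    (hdisj : ∀ i j, i ≠ j → Disjoint (X i) (X j))
    (hEFX : EFX v X)
    (g : G) (hg : g ∈ M) (hun : g ∉ X 0 ∪ X 1 ∪ X 2)
    (hch12 : MostEnvious v X 0 (X 1 ∪ {g}))
    (hch21 : MostEnvious v X 1 (X 0 ∪ {g}))
    (hnoself1 : ¬ MostEnvious v X 0 (X 0 ∪ {g}))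
    (hnoself2 : ¬ MostEnvious v X 1 (X 1 ∪ {g}))
    (hne12 : val (v 0) (X 1) ≤ val (v 0) (X 0))
    (hne21 : val (v 1) (X 0) ≤ val (v 1) (X 1))
    (hne31 : val (v 2) (X 0) ≤ val (v 2) (X 2))
    (hne32 : val (v 2) (X 1) ≤ val (v 2) (X 2)) :
    ∃ Y : Fin 3 → Finset G,
      (∀ i, Y i ⊆ M) ∧
      (∀ i j, i ≠ j → Disjoint (Y i) (Y j)) ∧
      Y 0 ∪ Y 1 ∪ Y 2 ⊆ X 0 ∪ X 1 ∪ X 2 ∪ {g} ∧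
      EFX v Y ∧
      (∀ i, val (v i) (X i) ≤ val (v i) (Y i)) ∧
      (∃ i, val (v i) (X i) < val (v i) (Y i)) := by
  have hunX : ∀ i, g ∉ X i := by
    intro i hi
    fin_cases i <;> simp_all
  have hsubM : ∀ i, X i ∪ {g} ⊆ M := fun i =>
    Finset.union_subset (hXM i) (Finset.singleton_subset_iff.2 hg)
  have hnn : ∀ i k, ∀ x ∈ X i ∪ {g}, 0 ≤ v k x := fun i k x hx => hv k x (hsubM i hx)
  have hself : ∀ i, val (v i) (X i) < val (v i) (X i ∪ {g}) := by
    intro i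
    refine lt_of_le_of_ne (val_mono Finset.subset_union_left (hnn i i))
      (hnd i _ (hXM i) _ (hsubM i) fun h => hunX i ?_)
    rw [h]
    simp
  obtain ⟨S₁, hS₁, h0S₁, hparts₁, hle₁⟩ := hch12.exists_subset (hnn 1)
  obtain ⟨S₀, hS₀, h1S₀, hparts₀, hle₀⟩ := hch21.exists_subset (hnn 0)
  have h0S₀ := hle₀ 0 (hself 0) hnoself1
  have h1S₁ := hle₁ 1 (hself 1) hnoself2
  obtain ⟨T₁, hT₁, rfl⟩ :=
    exists_eq_insert_of_val_lt (fun x hx => hv 0 x (hXM 1 hx)) hS₁ hne12 h0S₁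
  obtain ⟨T₀, hT₀, rfl⟩ :=
    exists_eq_insert_of_val_lt (fun x hx => hv 1 x (hXM 0 hx)) hS₀ hne21 h1S₀
  suffices h : ∃ Y : Fin 3 → Finset G,
      (∀ l, Y l ⊆ M) ∧
      (∀ l m, l ≠ m → Disjoint (Y l) (Y m)) ∧
      (∀ l, Y l ⊆ X 0 ∪ X 1 ∪ X 2 ∪ {g}) ∧
      EFX v Y ∧
      (∀ l, val (v l) (X l) ≤ val (v l) (Y l)) ∧
      (∃ l, val (v l) (X l) < val (v l) (Y l)) by
    obtain ⟨Y, hYM, hYd, hYsub, hY⟩ := h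
    exact ⟨Y, hYM, hYd,
      Finset.union_subset (Finset.union_subset (hYsub 0) (hYsub 1)) (hYsub 2), hY⟩
  by_cases hcase : val (v 2) (T₀ ∪ X 1 \ T₁) ≤ val (v 2) (X 2)
  · exact exists_dominating_efx_of_exchange hv hXM hdisj hEFX hg hunX (i := 0) (j := 1) (k := 2)
      (by decide) (by decide) (by decide) hT₀ hT₁ h0S₁ h0S₀ h1S₀ h1S₁ hparts₁ hne12 hcase
  · refine exists_dominating_efx_of_exchange hv hXM hdisj hEFX hg hunX (i := 1) (j := 0) (k := 2)
      (by decide) (by decide) (by decide) hT₁ hT₀ h1S₀ h1S₁ h0S₁ h0S₀ hparts₀ hne21 ?_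
    have h01 := hdisj 0 1 (by decide)
    rw [val_union_of_disjoint (h01.mono hT₀ Finset.sdiff_subset)] at hcase
    rw [val_union_of_disjoint (h01.symm.mono hT₁ Finset.sdiff_subset)]
    have hsplit₀ := val_union_of_disjoint (v := v 2) (Finset.disjoint_sdiff (s := T₀) (t := X 0))
    have hsplit₁ := val_union_of_disjoint (v := v 2) (Finset.disjoint_sdiff (s := T₁) (t := X 1))
    rw [Finset.union_sdiff_of_subset hT₀] at hsplit₀
    rw [Finset.union_sdiff_of_subset hT₁] at hsplit₁
    linarith
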